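/- (Titchmarsh convolution theorem.) Let f, g : ℝ → ℂ be continuous, compactly supported functions, neither identically zero. Then f ⋆ g is not identically zero, inf supp (f ⋆ g) = inf supp f + inf supp g, and sup supp (f ⋆ g) = sup supp f + sup supp g. -/

import Mathlib

open MeasureTheory Real Set

noncomputable section

/-- Convolution of functions on `ℝ` with respect to Lebesgue measure. -/
def convR (f g : ℝ → ℂ) : ℝ → ℂ := fun x => ∫ t : ℝ, f t * g (x - t)

/-!
The transforms `F z = ∫ exp (z t) f t dt` and `G` of `f` and `g` are entire, and the transform of
the convolution is `F G`. The right end of the support of `f` is the exponential growth rate of `F`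
on the positive real axis: if `F x = O(exp (a x))`, then the part of `f` living on `[a, ∞)` has,
after translation by `a`, a transform that is bounded by Phragmén–Lindelöf, constant by Liouville
and zero by Riemann–Lebesgue.

Growth rates add under multiplication. Let `F` have rate `a` and satisfy `|F z| ≤ A exp (a Re z)` on
the right half-plane. A lower bound for `|F x|` at a single large `x` is spread by the
Poisson–Jensen and Harnack inequalities to the circles `|z - R| = R`: the average of `log |F|` there
is `a R + o(R)` as `R → ∞`. These averages of logarithms add up over products.

The left ends of the supports follow by reflection.
-/

section PoissonJensen

open Complex Metric InnerProductSpace Filter Topology ComplexConjugate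

variable {F : ℂ → ℂ} {c u w : ℂ} {R : ℝ}

theorem norm_sq_sub_conj_mul_sub (R : ℝ) (a v : ℂ) :
    ‖(R : ℂ) ^ 2 - conj a * v‖ ^ 2 - (R * ‖v - a‖) ^ 2 =
      (R ^ 2 - ‖a‖ ^ 2) * (R ^ 2 - ‖v‖ ^ 2) := by
  simp only [mul_pow, ← Complex.normSq_eq_norm_sq, Complex.normSq_apply]
  simp only [← Complex.ofReal_pow, Complex.sub_re, Complex.sub_im, Complex.mul_re, Complex.mul_im,
    Complex.conj_re, Complex.conj_im, Complex.ofReal_re, Complex.ofReal_im]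
  ring

theorem mul_norm_sub_le_norm_sq_sub_conj_mul {a v : ℂ} (ha : ‖a‖ ≤ R) (hv : ‖v‖ ≤ R) :
    R * ‖v - a‖ ≤ ‖(R : ℂ) ^ 2 - conj a * v‖ := by
  have hprod : 0 ≤ (R ^ 2 - ‖a‖ ^ 2) * (R ^ 2 - ‖v‖ ^ 2) :=
    mul_nonneg (sub_nonneg.2 (by gcongr)) (sub_nonneg.2 (by gcongr))
  refine le_of_sq_le_sq ?_ (norm_nonneg _)
  linarith [norm_sq_sub_conj_mul_sub R a v]

theorem norm_sq_sub_conj_mul_of_norm_eq {v : ℂ} (a : ℂ) (hv : ‖v‖ = R) :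
    ‖(R : ℂ) ^ 2 - conj a * v‖ = R * ‖v - a‖ := by
  have hR : 0 ≤ R := hv ▸ norm_nonneg v
  have hsq := norm_sq_sub_conj_mul_sub R a v
  rw [hv, sub_self, mul_zero, sub_eq_zero] at hsq
  exact (pow_left_inj₀ (norm_nonneg _) (by positivity) two_ne_zero).1 hsq

theorem sq_sub_conj_mul_ne_zero {a v : ℂ} (ha : ‖a‖ < R) (hv : ‖v‖ ≤ R) :
    (R : ℂ) ^ 2 - conj a * v ≠ 0 := by
  have hR : 0 < R := (norm_nonneg a).trans_lt ha
  refine sub_ne_zero.2 fun heq => ?_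
  have hnorm : R * R = ‖a‖ * ‖v‖ := by
    simpa [abs_of_pos hR, pow_two] using congrArg norm heq
  nlinarith [norm_nonneg a, norm_nonneg v]

-- On the circle `|z - u|` agrees with the modulus of the zero-free function
-- `(R² - conj (u - c) (z - c)) / R`, to which the Poisson formula applies.
theorem log_norm_sub_le_circleAverage_of_mem_ball (hw : w ∈ ball c R) (hu : u ∈ ball c R)
    (hwu : w ≠ u) :
    Real.log ‖w - u‖ ≤ circleAverage (poissonKernel c w • fun z => Real.log ‖z - u‖) c R := by
  have hR : 0 < R := pos_of_mem_ball hw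
  have hu' : ‖u - c‖ < R := mem_ball_iff_norm.1 hu
  let q : ℂ → ℂ := fun z => ((R : ℂ) ^ 2 - conj (u - c) * (z - c)) / R
  have norm_q (z : ℂ) : ‖q z‖ = ‖(R : ℂ) ^ 2 - conj (u - c) * (z - c)‖ / R := by
    simp only [q, norm_div, Complex.norm_real, Real.norm_of_nonneg hR.le]
  have norm_q_sphere : ∀ z ∈ sphere c |R|, ‖q z‖ = ‖z - u‖ := by
    intro z hz
    rw [abs_of_pos hR, mem_sphere_iff_norm] at hz
    rw [norm_q, norm_sq_sub_conj_mul_of_norm_eq _ hz, sub_sub_sub_cancel_right,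
      mul_div_cancel_left₀ _ hR.ne']
  have norm_sub_le_q : ‖w - u‖ ≤ ‖q w‖ := by
    have hle := mul_norm_sub_le_norm_sq_sub_conj_mul hu'.le (mem_ball_iff_norm.1 hw).le
    rwa [norm_q, le_div_iff₀ hR, mul_comm, ← sub_sub_sub_cancel_right w u c]
  have harmonic_q : HarmonicOnNhd (fun z => Real.log ‖q z‖) (closedBall c R) := by
    intro z hz
    have hqz : AnalyticAt ℂ q z := Differentiable.analyticAt (by fun_prop) z
    refine hqz.harmonicAt_log_norm (div_ne_zero ?_ (ofReal_ne_zero.2 hR.ne'))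
    exact sq_sub_conj_mul_ne_zero hu' (mem_closedBall_iff_norm.1 hz)
  calc Real.log ‖w - u‖ ≤ Real.log ‖q w‖ :=
        Real.log_le_log (norm_pos_iff.2 (sub_ne_zero.2 hwu)) norm_sub_le_q
    _ = circleAverage (poissonKernel c w • fun z => Real.log ‖q z‖) c R :=
        (harmonic_q.circleAverage_poissonKernel_smul hw).symm
    _ = circleAverage (poissonKernel c w • fun z => Real.log ‖z - u‖) c R :=
        circleAverage_congr_sphere fun z hz => by simp only [Pi.smul_apply', norm_q_sphere z hz]

theorem log_norm_sub_le_circleAverage (hw : w ∈ ball c R) (hu : u ∈ closedBall c R)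
    (hwu : w ≠ u) :
    Real.log ‖w - u‖ ≤ circleAverage (poissonKernel c w • fun z => Real.log ‖z - u‖) c R := by
  rcases (mem_closedBall.1 hu).lt_or_eq with hlt | heq
  · exact log_norm_sub_le_circleAverage_of_mem_ball hw hlt hwu
  · rw [poissonKernel_eq_re_herglotzRieszKernel]
    exact (circleAverage_re_herglotzRieszKernel_mul_log heq hw).ge

theorem circleIntegrable_log_norm_of_analyticOnNhd_closedBall
    (hF : AnalyticOnNhd ℂ F (closedBall c R)) (hR : 0 ≤ R) :
    CircleIntegrable (fun z => Real.log ‖F z‖) c R := by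
  refine MeromorphicOn.circleIntegrable_log_norm ?_
  rw [abs_of_nonneg hR]
  exact (hF.mono sphere_subset_closedBall).meromorphicOn

theorem circleIntegrable_poissonKernel_smul {f : ℂ → ℝ} (hf : CircleIntegrable f c R)
    (hw : w ∈ ball c R) : CircleIntegrable (poissonKernel c w • f) c R := by
  refine hf.continuousOn_smul ?_
  rw [poissonKernel_eq_re_herglotzRieszKernel]
  exact Complex.continuous_re.comp_continuousOn (continuousOn_herglotzRieszKernel_sphere hw)

theorem finsum_smul_eq_sum_toNat_smul {ι M : Type*} [AddCommGroup M] [Module ℝ M] {n : ι → ℤ}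
    (hn : ∀ i, 0 ≤ n i) (hfin : n.support.Finite) (v : ι → M) :
    ∑ᶠ i, (n i : ℝ) • v i = ∑ i ∈ hfin.toFinset, ((n i).toNat : ℝ) • v i := by
  have coe_toNat (i : ι) : ((n i).toNat : ℝ) = n i := mod_cast Int.toNat_of_nonneg (hn i)
  simp only [coe_toNat]
  refine finsum_eq_sum_of_support_subset _ fun i hi => ?_
  simpa using fun hni : n i = 0 => hi (by simp [hni])

theorem exists_log_norm_eq_sum_log_norm_sub_add (hF : AnalyticOnNhd ℂ F (closedBall c R))
    (hw : w ∈ ball c R) (hFw : F w ≠ 0) :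
    ∃ (s : Finset ℂ) (m : ℂ → ℕ) (g : ℂ → ℂ), (s : Set ℂ) ⊆ closedBall c R ∧ w ∉ s ∧
      AnalyticOnNhd ℂ g (closedBall c R) ∧ (∀ z ∈ closedBall c R, g z ≠ 0) ∧
      (fun z => Real.log ‖F z‖) =ᶠ[codiscreteWithin (closedBall c R)]
        (fun z => ∑ u ∈ s, m u * Real.log ‖z - u‖ + Real.log ‖g z‖) ∧
      Real.log ‖F w‖ = ∑ u ∈ s, m u * Real.log ‖w - u‖ + Real.log ‖g w‖ := by
  have hwc : w ∈ closedBall c R := ball_subset_closedBall hw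
  have hFm : MeromorphicOn F (closedBall c R) := hF.meromorphicOn
  have order_w : meromorphicOrderAt F w = 0 := by
    simp [(hF w hwc).meromorphicOrderAt_eq, (hF w hwc).analyticOrderAt_eq_zero.2 hFw]
  have order_ne_top (u : closedBall c R) : meromorphicOrderAt F u ≠ ⊤ :=
    hFm.meromorphicOrderAt_ne_top_of_isPreconnected (convex_closedBall c R).isPreconnected hwc u.2
      (by simp [order_w])
  set D := MeromorphicOn.divisor F (closedBall c R)
  have hfin : D.support.Finite := D.finiteSupport (isCompact_closedBall c R)
  have hD : ∀ u, 0 ≤ D u := MeromorphicOn.AnalyticOnNhd.divisor_nonneg hF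
  have accPt_w : AccPt w (𝓟 (closedBall c R)) := by
    have hnhds : closedBall c R ∈ 𝓝[≠] w :=
      mem_nhdsWithin_of_mem_nhds (closedBall_mem_nhds_of_mem hw)
    rw [AccPt, inf_eq_left.2 (le_principal_iff.2 hnhds)]
    infer_instance
  obtain ⟨g, hg, hg0, hFg⟩ := hFm.extract_zeros_poles order_ne_top hfin
  have hFw_eq := MeromorphicOn.log_norm_meromorphicTrailingCoeffAt_extract_zeros_poles hfin hwc
    accPt_w (hFm w hwc) (hg w hwc) (hg0 ⟨w, hwc⟩) hFg
  rw [(hF w hwc).meromorphicTrailingCoeffAt_of_ne_zero hFw] at hFw_eq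
  refine ⟨hfin.toFinset, fun u => (D u).toNat, g, ?_, ?_, hg, fun z hz => hg0 ⟨z, hz⟩, ?_, ?_⟩
  · simpa using D.supportWithinDomain
  · simp [D, MeromorphicOn.divisor_apply hFm hwc, order_w]
  · filter_upwards [MeromorphicOn.extract_zeros_poles_log hg0 hFg] with z hz
    rw [hz, Pi.add_apply, add_left_inj]
    refine (congrFun (finsum_smul_eq_sum_toNat_smul hD hfin fun u z => Real.log ‖z - u‖) z).trans ?_
    simp
  · simpa [hFw_eq] using finsum_smul_eq_sum_toNat_smul hD hfin fun u => Real.log ‖w - u‖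

theorem circleAverage_poissonKernel_smul_sum_add {ι : Type*} {s : Finset ι} {a : ι → ℝ}
    {f : ι → ℂ → ℝ} {h : ℂ → ℝ} (hf : ∀ i ∈ s, CircleIntegrable (f i) c R)
    (hh : CircleIntegrable h c R) (hw : w ∈ ball c R) :
    circleAverage (poissonKernel c w • fun z => ∑ i ∈ s, a i * f i z + h z) c R =
      ∑ i ∈ s, a i * circleAverage (poissonKernel c w • f i) c R +
        circleAverage (poissonKernel c w • h) c R := by
  have hterm : ∀ i ∈ s, CircleIntegrable (a i • (poissonKernel c w • f i)) c R := fun i hi =>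
    (circleIntegrable_poissonKernel_smul (hf i hi) hw).const_smul
  have hexpand : (poissonKernel c w • fun z => ∑ i ∈ s, a i * f i z + h z) =
      ∑ i ∈ s, a i • (poissonKernel c w • f i) + poissonKernel c w • h := by
    ext z
    simp [mul_add, Finset.mul_sum, mul_left_comm]
  rw [hexpand, circleAverage_add (CircleIntegrable.sum _ hterm)
    (circleIntegrable_poissonKernel_smul hh hw), circleAverage_sum hterm]
  simp only [circleAverage_smul, smul_eq_mul]

theorem log_norm_le_circleAverage_poissonKernel_smul (hF : AnalyticOnNhd ℂ F (closedBall c R))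
    (hw : w ∈ ball c R) (hFw : F w ≠ 0) :
    Real.log ‖F w‖ ≤ circleAverage (poissonKernel c w • fun z => Real.log ‖F z‖) c R := by
  have hR : 0 < R := pos_of_mem_ball hw
  obtain ⟨s, m, g, hs, hws, hg, hg0, hFg, hFgw⟩ :=
    exists_log_norm_eq_sum_log_norm_sub_add hF hw hFw
  have integrable_factor : ∀ u ∈ s, CircleIntegrable (fun z => Real.log ‖z - u‖) c R := fun u _ =>
    (analyticOnNhd_id.sub analyticOnNhd_const).meromorphicOn.circleIntegrable_log_norm
  have integrable_g : CircleIntegrable (fun z => Real.log ‖g z‖) c R :=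
    circleIntegrable_log_norm_of_analyticOnNhd_closedBall hg hR.le
  have harmonic_g : HarmonicOnNhd (fun z => Real.log ‖g z‖) (closedBall c R) :=
    fun z hz => (hg z hz).harmonicAt_log_norm (hg0 z hz)
  calc Real.log ‖F w‖ = ∑ u ∈ s, m u * Real.log ‖w - u‖ + Real.log ‖g w‖ := hFgw
    _ ≤ ∑ u ∈ s, m u * circleAverage (poissonKernel c w • fun z => Real.log ‖z - u‖) c R +
        circleAverage (poissonKernel c w • fun z => Real.log ‖g z‖) c R := by
      rw [harmonic_g.circleAverage_poissonKernel_smul hw]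
      gcongr with u hu
      exact log_norm_sub_le_circleAverage hw (hs hu) (ne_of_mem_of_not_mem hu hws).symm
    _ = circleAverage (poissonKernel c w •
          fun z => ∑ u ∈ s, m u * Real.log ‖z - u‖ + Real.log ‖g z‖) c R :=
      (circleAverage_poissonKernel_smul_sum_add integrable_factor integrable_g hw).symm
    _ = circleAverage (poissonKernel c w • fun z => Real.log ‖F z‖) c R := by
      refine circleAverage_congr_codiscreteWithin ?_ hR.ne'
      rw [abs_of_pos hR]
      filter_upwards [codiscreteWithin_mono sphere_subset_closedBall hFg] with z hz
      simp only [Pi.smul_apply', hz]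

theorem log_norm_le_mul_circleAverage (hF : AnalyticOnNhd ℂ F (closedBall c R))
    (hF1 : ∀ z ∈ sphere c R, ‖F z‖ ≤ 1) (hw : w ∈ ball c R) (hFw : F w ≠ 0) :
    Real.log ‖F w‖ ≤
      (R - ‖w - c‖) / (R + ‖w - c‖) * circleAverage (fun z => Real.log ‖F z‖) c R := by
  have hR : 0 < R := pos_of_mem_ball hw
  have integrable_log : CircleIntegrable (fun z => Real.log ‖F z‖) c R :=
    circleIntegrable_log_norm_of_analyticOnNhd_closedBall hF hR.le
  have le_poissonKernel : ∀ z ∈ sphere c R,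
      (R - ‖w - c‖) / (R + ‖w - c‖) ≤ poissonKernel c w z := fun z hz => by
    rw [poissonKernel_eq_re_herglotzRieszKernel]
    exact le_re_herglotzRieszKernel hz hw
  calc Real.log ‖F w‖
      ≤ circleAverage (poissonKernel c w • fun z => Real.log ‖F z‖) c R :=
        log_norm_le_circleAverage_poissonKernel_smul hF hw hFw
    _ ≤ circleAverage (fun z => ((R - ‖w - c‖) / (R + ‖w - c‖)) • Real.log ‖F z‖) c R := by
        refine circleAverage_mono (circleIntegrable_poissonKernel_smul integrable_log hw)
          integrable_log.const_smul fun z hz => ?_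
        rw [abs_of_pos hR] at hz
        exact mul_le_mul_of_nonpos_right (le_poissonKernel z hz)
          (Real.log_nonpos (norm_nonneg _) (hF1 z hz))
    _ = (R - ‖w - c‖) / (R + ‖w - c‖) * circleAverage (fun z => Real.log ‖F z‖) c R :=
        circleAverage_fun_smul

end PoissonJensen

section CircleAverage

open Complex Metric Filter

variable {F G : ℂ → ℂ} {c w x y : ℂ} {R A a : ℝ}

theorem eventually_codiscreteWithin_sphere_ne_zero (hF : AnalyticOnNhd ℂ F (closedBall c R))
    (hx : x ∈ closedBall c R) (hFx : F x ≠ 0) :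
    ∀ᶠ z in codiscreteWithin (sphere c R), F z ≠ 0 := by
  have hconn : IsConnected (closedBall c R) := (convex_closedBall c R).isConnected ⟨x, hx⟩
  exact codiscreteWithin_mono sphere_subset_closedBall
    (hF.preimage_zero_mem_codiscreteWithin hFx hx hconn)

theorem circleAverage_log_norm_mul (hF : AnalyticOnNhd ℂ F (closedBall c R))
    (hG : AnalyticOnNhd ℂ G (closedBall c R))
    (hF0 : ∀ᶠ z in codiscreteWithin (sphere c R), F z ≠ 0)
    (hG0 : ∀ᶠ z in codiscreteWithin (sphere c R), G z ≠ 0) (hR : 0 < R) :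
    circleAverage (fun z => Real.log ‖F z * G z‖) c R =
      circleAverage (fun z => Real.log ‖F z‖) c R +
        circleAverage (fun z => Real.log ‖G z‖) c R := by
  rw [← circleAverage_add (circleIntegrable_log_norm_of_analyticOnNhd_closedBall hF hR.le)
    (circleIntegrable_log_norm_of_analyticOnNhd_closedBall hG hR.le)]
  refine circleAverage_congr_codiscreteWithin ?_ hR.ne'
  rw [abs_of_pos hR]
  filter_upwards [hF0, hG0] with z hFz hGz
  rw [norm_mul, Real.log_mul (norm_ne_zero_iff.2 hFz) (norm_ne_zero_iff.2 hGz), Pi.add_apply]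

theorem norm_const_mul_exp (hA : 0 ≤ A) (z : ℂ) : ‖A * cexp (a * z)‖ = A * rexp (a * z.re) := by
  rw [norm_mul, Complex.norm_of_nonneg hA, Complex.norm_exp, re_ofReal_mul]

theorem log_norm_const_mul_exp (hA : 0 < A) (z : ℂ) :
    Real.log ‖A * cexp (a * z)‖ = Real.log A + a * z.re := by
  rw [norm_const_mul_exp hA.le, Real.log_mul hA.ne' (Real.exp_ne_zero _), Real.log_exp]

theorem const_mul_exp_ne_zero (hA : 0 < A) (z : ℂ) : A * cexp (a * z) ≠ 0 :=
  mul_ne_zero (ofReal_ne_zero.2 hA.ne') (Complex.exp_ne_zero _)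

theorem analyticOnNhd_const_mul_exp (A a : ℝ) (s : Set ℂ) :
    AnalyticOnNhd ℂ (fun z => A * cexp (a * z)) s :=
  fun z _ => Differentiable.analyticAt (by fun_prop) z

theorem circleAverage_log_norm_mul_exp (hF : AnalyticOnNhd ℂ F (closedBall c R))
    (hF0 : ∀ᶠ z in codiscreteWithin (sphere c R), F z ≠ 0) (hR : 0 < R) (hA : 0 < A) :
    circleAverage (fun z => Real.log ‖F z * (A * cexp (a * z))‖) c R =
      circleAverage (fun z => Real.log ‖F z‖) c R + (Real.log A + a * c.re) := by
  rw [circleAverage_log_norm_mul hF (analyticOnNhd_const_mul_exp A a _) hF0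
      (Eventually.of_forall (const_mul_exp_ne_zero hA)) hR,
    (analyticOnNhd_const_mul_exp A a _).circleAverage_log_norm_of_ne_zero
      fun z _ => const_mul_exp_ne_zero hA z,
    log_norm_const_mul_exp hA]

theorem norm_mul_exp_le_one {z : ℂ} (hA : 0 < A) (hz : ‖F z‖ ≤ A * rexp (a * z.re)) :
    ‖F z * ((A⁻¹ : ℝ) * cexp ((-a : ℝ) * z))‖ ≤ 1 := by
  rw [norm_mul, norm_const_mul_exp (inv_nonneg.2 hA.le)]
  calc ‖F z‖ * (A⁻¹ * rexp (-a * z.re))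
      ≤ A * rexp (a * z.re) * (A⁻¹ * rexp (-a * z.re)) := by gcongr
    _ = A * A⁻¹ * (rexp (a * z.re) * rexp (-a * z.re)) := by ring
    _ = 1 := by rw [mul_inv_cancel₀ hA.ne', one_mul, ← Real.exp_add]; simp

theorem circleAverage_log_norm_le (hF : AnalyticOnNhd ℂ F (closedBall c R))
    (hF0 : ∀ᶠ z in codiscreteWithin (sphere c R), F z ≠ 0) (hR : 0 < R) (hA : 0 < A)
    (hFA : ∀ z ∈ sphere c R, ‖F z‖ ≤ A * rexp (a * z.re)) :
    circleAverage (fun z => Real.log ‖F z‖) c R ≤ Real.log A + a * c.re := by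
  let N : ℂ → ℂ := fun z => F z * ((A⁻¹ : ℝ) * cexp ((-a : ℝ) * z))
  have hN : AnalyticOnNhd ℂ N (closedBall c R) := hF.mul (analyticOnNhd_const_mul_exp _ _ _)
  have avg_nonpos : circleAverage (fun z => Real.log ‖N z‖) c R ≤ 0 := by
    refine circleAverage_mono_on_of_le_circle
      (circleIntegrable_log_norm_of_analyticOnNhd_closedBall hN hR.le) fun z hz => ?_
    rw [abs_of_pos hR] at hz
    exact Real.log_nonpos (norm_nonneg _) (norm_mul_exp_le_one hA (hFA z hz))
  rw [circleAverage_log_norm_mul_exp hF hF0 hR (inv_pos.2 hA), Real.log_inv] at avg_nonpos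
  linarith

theorem log_norm_sub_le_mul_circleAverage_sub (hF : AnalyticOnNhd ℂ F (closedBall c R))
    (hw : w ∈ ball c R) (hFw : F w ≠ 0) (hA : 0 < A)
    (hFA : ∀ z ∈ sphere c R, ‖F z‖ ≤ A * rexp (a * z.re)) :
    Real.log ‖F w‖ - (Real.log A + a * w.re) ≤ (R - ‖w - c‖) / (R + ‖w - c‖) *
      (circleAverage (fun z => Real.log ‖F z‖) c R - (Real.log A + a * c.re)) := by
  let N : ℂ → ℂ := fun z => F z * ((A⁻¹ : ℝ) * cexp ((-a : ℝ) * z))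
  have hN : AnalyticOnNhd ℂ N (closedBall c R) := hF.mul (analyticOnNhd_const_mul_exp _ _ _)
  have hR : 0 < R := pos_of_mem_ball hw
  have hF0 := eventually_codiscreteWithin_sphere_ne_zero hF (ball_subset_closedBall hw) hFw
  have hharnack : Real.log ‖N w‖ ≤
      (R - ‖w - c‖) / (R + ‖w - c‖) * circleAverage (fun z => Real.log ‖N z‖) c R :=
    log_norm_le_mul_circleAverage hN (fun z hz => norm_mul_exp_le_one hA (hFA z hz)) hw
      (mul_ne_zero hFw (const_mul_exp_ne_zero (inv_pos.2 hA) w))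
  have log_N : Real.log ‖N w‖ = Real.log ‖F w‖ + (Real.log A⁻¹ + -a * w.re) := by
    rw [← log_norm_const_mul_exp (inv_pos.2 hA), ← Real.log_mul (norm_ne_zero_iff.2 hFw)
      (norm_ne_zero_iff.2 (const_mul_exp_ne_zero (inv_pos.2 hA) w)), ← norm_mul]
  rw [circleAverage_log_norm_mul_exp hF hF0 hR (inv_pos.2 hA), log_N, Real.log_inv] at hharnack
  convert hharnack using 2 <;> ring

end CircleAverage

section RightHalfPlane

open Complex Metric Filter Asymptotics

variable {F G : ℂ → ℂ} {A B C a a' b c R : ℝ}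

theorem norm_ofReal_sub_ofReal_of_le {x : ℝ} (hxR : x ≤ R) : ‖(x : ℂ) - R‖ = R - x := by
  rw [← ofReal_sub, norm_real, Real.norm_of_nonpos (sub_nonpos.2 hxR), neg_sub]

theorem closedBall_ofReal_subset (R : ℝ) : closedBall (R : ℂ) R ⊆ {z | 0 ≤ z.re} := by
  intro z hz
  have hre : |z.re - R| ≤ R := by
    simpa using (abs_re_le_norm (z - R)).trans (mem_closedBall_iff_norm.1 hz)
  change 0 ≤ z.re
  linarith [(abs_le.1 hre).1]

theorem eventually_codiscreteWithin_sphere_ne_zero_of_not_isBigO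
    (hF : AnalyticOnNhd ℂ F {z | 0 ≤ z.re}) {g : ℝ → ℝ} (hFg : ¬(fun x : ℝ => F x) =O[atTop] g) :
    ∀ᶠ R : ℝ in atTop, ∀ᶠ z in codiscreteWithin (sphere (R : ℂ) R), F z ≠ 0 := by
  have hfreq : ∃ᶠ x : ℝ in atTop, F x ≠ 0 := by
    intro hzero
    have heq : (fun x : ℝ => F x) =ᶠ[atTop] 0 := hzero.mono fun x hx => not_not.1 hx
    exact hFg (heq.trans_isBigO (isBigO_zero g atTop))
  obtain ⟨x, hFx, hx⟩ := (hfreq.and_eventually (eventually_ge_atTop 0)).exists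
  filter_upwards [eventually_ge_atTop x] with R hR
  refine eventually_codiscreteWithin_sphere_ne_zero (hF.mono (closedBall_ofReal_subset R)) ?_ hFx
  rw [mem_closedBall_iff_norm, norm_ofReal_sub_ofReal_of_le hR]
  linarith

theorem eventually_mul_le_circleAverage_log_norm (hF : AnalyticOnNhd ℂ F {z | 0 ≤ z.re})
    (hFA : ∀ z : ℂ, 0 ≤ z.re → ‖F z‖ ≤ A * rexp (a * z.re))
    (hFa : ∀ a' < a, ¬(fun x : ℝ => F x) =O[atTop] fun x => rexp (a' * x)) (ha' : a' < a) :
    ∀ᶠ R : ℝ in atTop, a' * R ≤ circleAverage (fun z => Real.log ‖F z‖) R R := by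
  obtain ⟨ε, hε, rfl⟩ : ∃ ε > 0, a = a' + 2 * ε := ⟨(a - a') / 2, by linarith, by ring⟩
  have hfreq : ∃ᶠ x : ℝ in atTop, A * rexp ((a' + ε) * x) < ‖F x‖ := by
    refine fun hle => hFa (a' + ε) (by linarith) (IsBigO.of_bound A ?_)
    simpa using hle
  obtain ⟨x, hFx, hx, hAx⟩ := (hfreq.and_eventually
    ((eventually_gt_atTop 0).and (eventually_ge_atTop (-Real.log A / ε)))).exists
  have hA0 : 0 ≤ A := by simpa using (norm_nonneg _).trans (hFA 0 le_rfl)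
  have hFx0 : 0 < ‖F x‖ := (by positivity : 0 ≤ A * rexp ((a' + ε) * x)).trans_lt hFx
  have hA : 0 < A := pos_of_mul_pos_left (hFx0.trans_le (hFA x hx.le)) (Real.exp_nonneg _)
  have log_Fx : Real.log A + (a' + ε) * x ≤ Real.log ‖F x‖ := by
    rw [← Real.log_exp ((a' + ε) * x), ← Real.log_mul hA.ne' (Real.exp_ne_zero _)]
    exact Real.log_le_log (by positivity) hFx.le
  filter_upwards [eventually_gt_atTop x] with R hxR
  have hxball : (x : ℂ) ∈ ball (R : ℂ) R := by
    rw [mem_ball_iff_norm, norm_ofReal_sub_ofReal_of_le hxR.le]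
    linarith
  have hharnack := log_norm_sub_le_mul_circleAverage_sub (hF.mono (closedBall_ofReal_subset R))
    hxball (norm_pos_iff.1 hFx0) hA
    fun z hz => hFA z (closedBall_ofReal_subset R (sphere_subset_closedBall hz))
  rw [norm_ofReal_sub_ofReal_of_le hxR.le, ofReal_re, ofReal_re, sub_sub_cancel,
    div_mul_eq_mul_div, le_div_iff₀ (by linarith)] at hharnack
  have le_log_loss : -(ε * x) * (R + (R - x)) ≤
      (Real.log ‖F x‖ - (Real.log A + (a' + 2 * ε) * x)) * (R + (R - x)) :=
    mul_le_mul_of_nonneg_right (by linarith) (by linarith)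
  have log_A_add_nonneg : 0 ≤ x * (Real.log A + ε * x) :=
    mul_nonneg hx.le (by linarith [(div_le_iff₀ hε).1 hAx])
  refine le_of_mul_le_mul_left ?_ hx
  linarith

theorem add_le_of_norm_mul_le_exp (hF : AnalyticOnNhd ℂ F {z | 0 ≤ z.re})
    (hG : AnalyticOnNhd ℂ G {z | 0 ≤ z.re})
    (hFA : ∀ z : ℂ, 0 ≤ z.re → ‖F z‖ ≤ A * rexp (a * z.re))
    (hGB : ∀ z : ℂ, 0 ≤ z.re → ‖G z‖ ≤ B * rexp (b * z.re))
    (hFa : ∀ a' < a, ¬(fun x : ℝ => F x) =O[atTop] fun x => rexp (a' * x))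
    (hGb : ∀ b' < b, ¬(fun x : ℝ => G x) =O[atTop] fun x => rexp (b' * x))
    (hFG : ∀ z : ℂ, 0 ≤ z.re → ‖F z * G z‖ ≤ C * rexp (c * z.re)) : a + b ≤ c := by
  by_contra! hlt
  obtain ⟨ε, hε, hab⟩ : ∃ ε > 0, a + b = c + 3 * ε := ⟨(a + b - c) / 3, by linarith, by ring⟩
  have haε : a - ε < a := sub_lt_self a hε
  have hbε : b - ε < b := sub_lt_self b hε
  have hF_ev := (eventually_mul_le_circleAverage_log_norm hF hFA hFa haε).and
    (eventually_codiscreteWithin_sphere_ne_zero_of_not_isBigO hF (hFa _ haε))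
  have hG_ev := (eventually_mul_le_circleAverage_log_norm hG hGB hGb hbε).and
    (eventually_codiscreteWithin_sphere_ne_zero_of_not_isBigO hG (hGb _ hbε))
  have hR_ev := (eventually_gt_atTop 0).and (eventually_gt_atTop (Real.log (max C 1) / ε))
  obtain ⟨R, ⟨hF_le, hF0⟩, ⟨hG_le, hG0⟩, hR, hCR⟩ := (hF_ev.and (hG_ev.and hR_ev)).exists
  have hF' := hF.mono (closedBall_ofReal_subset R)
  have hG' := hG.mono (closedBall_ofReal_subset R)
  have hmul := circleAverage_log_norm_mul hF' hG' hF0 hG0 hR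
  have hFG_le : circleAverage (fun z => Real.log ‖F z * G z‖) R R ≤
      Real.log (max C 1) + c * R := by
    refine circleAverage_log_norm_le (hF'.mul hG') ?_ hR (by positivity) fun z hz => ?_
    · filter_upwards [hF0, hG0] with z hFz hGz using mul_ne_zero hFz hGz
    · refine (hFG z (closedBall_ofReal_subset R (sphere_subset_closedBall hz))).trans ?_
      gcongr
      exact le_max_left C 1
  have log_lt : Real.log (max C 1) < R * ε := (div_lt_iff₀ hε).1 hCR
  have hsum : (a + b) * R = (c + 3 * ε) * R := by rw [hab]
  linarith

end RightHalfPlane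

section Laplace

open Complex Metric Filter Topology Asymptotics

variable {E : Type*} [NormedAddCommGroup E] [NormedSpace ℂ E] {f : ℝ → E} {a : ℝ}

/-- The two-sided Laplace transform, normalised with the kernel `exp (z * t)` so that its growth as
`z.re → ∞` is governed by the right end of the support of `f`. -/
def laplace (f : ℝ → E) (z : ℂ) : E := ∫ t : ℝ, cexp (z * t) • f t

theorem norm_exp_mul_ofReal_smul (z : ℂ) (t : ℝ) (v : E) :
    ‖cexp (z * t) • v‖ = rexp (z.re * t) * ‖v‖ := by
  rw [norm_smul, Complex.norm_exp, re_mul_ofReal]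

theorem re_mul_le_mul_norm {z : ℂ} {t L : ℝ} (ht : ‖t‖ ≤ L) : z.re * t ≤ L * ‖z‖ :=
  calc z.re * t ≤ ‖t‖ * |z.re| := by
        rw [mul_comm, Real.norm_eq_abs, ← abs_mul]
        exact le_abs_self _
    _ ≤ L * ‖z‖ := mul_le_mul ht (abs_re_le_norm z) (abs_nonneg _) ((norm_nonneg t).trans ht)

theorem integrable_exp_smul (hf : Integrable f) (hcf : HasCompactSupport f) (z : ℂ) :
    Integrable fun t : ℝ => cexp (z * t) • f t := by
  have hsupp : Function.support (fun t : ℝ => cexp (z * t) • f t) ⊆ tsupport f :=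
    (Function.support_smul_subset_right _ f).trans (subset_tsupport f)
  refine (integrableOn_iff_integrable_of_support_subset hsupp).1 ?_
  exact hf.integrableOn.continuousOn_smul (by fun_prop) hcf.isCompact

theorem norm_laplace_le (hf : Integrable f) {z : ℂ} {c : ℝ} (hz : ∀ t, f t ≠ 0 → z.re * t ≤ c) :
    ‖laplace f z‖ ≤ (∫ t, ‖f t‖) * rexp c := by
  rw [← integral_mul_const]
  refine norm_integral_le_of_norm_le (hf.norm.mul_const _) (Eventually.of_forall fun t => ?_)
  rw [norm_exp_mul_ofReal_smul, mul_comm]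
  rcases eq_or_ne (f t) 0 with h0 | h0
  · simp [h0]
  · gcongr
    exact hz t h0

theorem differentiable_laplace (hf : Integrable f) (hcf : HasCompactSupport f) :
    Differentiable ℂ (laplace f) := by
  intro z
  obtain ⟨L, hL, hfL⟩ := hcf.isCompact.isBounded.exists_pos_norm_le
  have hderiv (t : ℝ) (w : ℂ) :
      HasDerivAt (fun w : ℂ => cexp (w * t) • f t) ((cexp (w * t) * t) • f t) w := by
    simpa using (((hasDerivAt_id w).mul_const (t : ℂ)).cexp.smul_const (f t))
  have hbound (t : ℝ) (w : ℂ) (hw : w ∈ ball z 1) :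
      ‖(cexp (w * t) * t) • f t‖ ≤ rexp (L * (‖z‖ + 1)) * L * ‖f t‖ := by
    have hw' : ‖w‖ ≤ ‖z‖ + 1 := by
      linarith [norm_sub_norm_le w z, mem_ball_iff_norm.1 hw]
    rcases eq_or_ne (f t) 0 with h0 | h0
    · simp [h0]
    · have ht : ‖t‖ ≤ L := hfL t (subset_tsupport f h0)
      rw [norm_smul, norm_mul, Complex.norm_exp, re_mul_ofReal, norm_real]
      have hexp : w.re * t ≤ L * (‖z‖ + 1) := (re_mul_le_mul_norm ht).trans (by gcongr)
      gcongr
  refine (hasDerivAt_integral_of_dominated_loc_of_deriv_le (ball_mem_nhds z one_pos)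
    (Eventually.of_forall fun w => (integrable_exp_smul hf hcf w).aestronglyMeasurable)
    (integrable_exp_smul hf hcf z) ?_ (Eventually.of_forall hbound) (hf.norm.const_mul _)
    (Eventually.of_forall fun t w _ => hderiv t w)).2.differentiableAt
  fun_prop

theorem laplace_indicator_add_laplace_indicator_compl (hf : Integrable f)
    (hcf : HasCompactSupport f) {s : Set ℝ} (hs : MeasurableSet s) (z : ℂ) :
    laplace (s.indicator f) z + laplace (sᶜ.indicator f) z = laplace f z := by
  rw [laplace, laplace, laplace]
  simp only [← indicator_smul]
  rw [integral_indicator hs, integral_indicator hs.compl]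
  exact integral_add_compl hs (integrable_exp_smul hf hcf z)

theorem fourier_eq_laplace (f : ℝ → E) (ξ : ℝ) :
    FourierTransform.fourier f ξ = laplace f (-2 * π * ξ * I) := by
  rw [Real.fourier_real_eq_integral_exp_smul, laplace]
  congr with t
  congr 2
  push_cast
  ring

theorem isBigO_laplace_exp_mul_norm (hf : Integrable f) (hcf : HasCompactSupport f)
    (l : Filter ℂ) : ∃ L, laplace f =O[l] fun z => rexp (L * ‖z‖) := by
  obtain ⟨L, hfL⟩ := isBounded_iff_forall_norm_le.1 hcf.isCompact.isBounded
  refine ⟨L, IsBigO.of_bound (∫ t, ‖f t‖) (Eventually.of_forall fun z => ?_)⟩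
  rw [Real.norm_eq_abs, Real.abs_exp]
  exact norm_laplace_le hf fun t ht => re_mul_le_mul_norm (hfL t (subset_tsupport f ht))

theorem laplace_comp_add_right (f : ℝ → E) (a : ℝ) (z : ℂ) :
    laplace (fun t => f (t + a)) z = cexp (-(z * a)) • laplace f z := by
  rw [laplace, laplace, ← integral_smul,
    ← integral_add_right_eq_self (fun t : ℝ => cexp (-(z * a)) • cexp (z * t) • f t) a]
  congr with t
  rw [smul_smul, ← Complex.exp_add]
  congr 2
  push_cast
  ring

theorem norm_laplace_le_of_isBigO_one (hf : Integrable f) (hcf : HasCompactSupport f)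
    (hf0 : ∀ t < 0, f t = 0) (hO : (fun x : ℝ => laplace f x) =O[atTop] (1 : ℝ → ℝ)) (z : ℂ) :
    ‖laplace f z‖ ≤ ∫ t, ‖f t‖ := by
  have hleft (z : ℂ) (hz : z.re ≤ 0) : ‖laplace f z‖ ≤ ∫ t, ‖f t‖ := by
    rw [← mul_one (∫ t, ‖f t‖), ← Real.exp_zero]
    refine norm_laplace_le hf fun t ht => ?_
    exact mul_nonpos_of_nonpos_of_nonneg hz (not_lt.1 fun hlt => ht (hf0 t hlt))
  rcases le_total z.re 0 with hz | hz
  · exact hleft z hz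
  refine PhragmenLindelof.right_half_plane_of_bounded_on_real
    (differentiable_laplace hf hcf).diffContOnCl ?_ ((isBigO_one_iff ℝ).1 hO)
    (fun y => hleft _ (by simp)) hz
  obtain ⟨L, hL⟩ := isBigO_laplace_exp_mul_norm hf hcf (Bornology.cobounded ℂ ⊓ 𝓟 {z | 0 < z.re})
  exact ⟨1, one_lt_two, L, by simpa only [Real.rpow_one] using hL⟩

theorem laplace_eq_zero_of_isBigO_one (hf : Integrable f) (hcf : HasCompactSupport f)
    (hf0 : ∀ t < 0, f t = 0) (hO : (fun x : ℝ => laplace f x) =O[atTop] (1 : ℝ → ℝ)) :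
    laplace f = 0 := by
  have hconst (z w : ℂ) : laplace f z = laplace f w := by
    refine (differentiable_laplace hf hcf).apply_eq_apply_of_bounded ?_ z w
    refine isBounded_iff_forall_norm_le.2 ⟨∫ t, ‖f t‖, ?_⟩
    rintro _ ⟨z, rfl⟩
    exact norm_laplace_le_of_isBigO_one hf hcf hf0 hO z
  have hfourier : Tendsto (fun _ : ℝ => laplace f 0) (cocompact ℝ) (𝓝 0) :=
    (Real.zero_at_infty_fourier f).congr fun ξ => (fourier_eq_laplace f ξ).trans (hconst _ 0)
  ext z
  exact (hconst z 0).trans (tendsto_nhds_unique tendsto_const_nhds hfourier)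

theorem eq_zero_of_laplace_eq_zero [CompleteSpace E] (hf : Integrable f) (h0 : laplace f = 0)
    {t : ℝ} (ht : ContinuousAt f t) : f t = 0 := by
  have hfourier : FourierTransform.fourier f = 0 := by
    ext ξ
    rw [fourier_eq_laplace, h0, Pi.zero_apply, Pi.zero_apply]
  rw [← hf.fourierInv_fourier_eq (hfourier ▸ integrable_zero _ _ _) ht, hfourier]
  simp [Real.fourierInv_eq]

theorem eqOn_zero_Ioi_of_isBigO_one_laplace [CompleteSpace E] (hf : Continuous f)
    (hcf : HasCompactSupport f) (hO : (fun x : ℝ => laplace f x) =O[atTop] (1 : ℝ → ℝ)) :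
    EqOn f 0 (Ioi 0) := by
  intro t ht
  have hfi : Integrable f := hf.integrable_of_hasCompactSupport hcf
  let p : ℝ → E := (Ici 0).indicator f
  have hp : Integrable p := hfi.indicator measurableSet_Ici
  have hcp : HasCompactSupport p := hcf.mono (by simp [p])
  have hO_compl : (fun x : ℝ => laplace ((Ici 0)ᶜ.indicator f) x) =O[atTop] (1 : ℝ → ℝ) := by
    refine IsBigO.of_bound (∫ t, ‖(Ici 0)ᶜ.indicator f t‖)
      ((eventually_ge_atTop 0).mono fun x hx => ?_)
    rw [Pi.one_apply, norm_one, ← Real.exp_zero]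
    refine norm_laplace_le (hfi.indicator measurableSet_Ici.compl) fun s hs => ?_
    have hs0 : s < 0 := by simpa using mem_of_indicator_ne_zero hs
    exact mul_nonpos_of_nonneg_of_nonpos hx hs0.le
  have hO_p : (fun x : ℝ => laplace p x) =O[atTop] (1 : ℝ → ℝ) := by
    refine (hO.sub hO_compl).congr_left fun x => ?_
    rw [← laplace_indicator_add_laplace_indicator_compl hfi hcf measurableSet_Ici x,
      add_sub_cancel_right]
  have laplace_p : laplace p = 0 :=
    laplace_eq_zero_of_isBigO_one hp hcp (fun s hs => indicator_of_notMem (not_le.2 hs) f) hO_p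
  have hpf : p =ᶠ[𝓝 t] f := by
    filter_upwards [Ioi_mem_nhds ht] with s hs
    exact indicator_of_mem (le_of_lt hs) f
  rw [← hpf.eq_of_nhds]
  exact eq_zero_of_laplace_eq_zero hp laplace_p (hf.continuousAt.congr hpf.symm)

theorem eqOn_zero_Ioi_of_isBigO_laplace [CompleteSpace E] (hf : Continuous f)
    (hcf : HasCompactSupport f)
    (hO : (fun x : ℝ => laplace f x) =O[atTop] fun x => rexp (a * x)) : EqOn f 0 (Ioi a) := by
  intro t ht
  have hO_shift : (fun x : ℝ => laplace (fun s => f (s + a)) x) =O[atTop] (1 : ℝ → ℝ) := by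
    have hexp : (fun x : ℝ => cexp (-(x * a))) =O[atTop] fun x : ℝ => rexp (-(a * x)) :=
      isBigO_of_le _ fun x => by simp [Complex.norm_exp, mul_comm]
    refine (hexp.smul hO).congr (fun x => (laplace_comp_add_right f a x).symm) fun x => ?_
    rw [smul_eq_mul, ← Real.exp_add, neg_add_cancel, Real.exp_zero, Pi.one_apply]
  have hzero := eqOn_zero_Ioi_of_isBigO_one_laplace (f := fun s => f (s + a)) (by fun_prop)
    (hcf.comp_homeomorph (Homeomorph.addRight a)) hO_shift (mem_Ioi.2 (sub_pos.2 ht))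
  simpa using hzero

theorem laplace_convolution {E' F : Type*} [NormedAddCommGroup E'] [NormedSpace ℂ E']
    [NormedAddCommGroup F] [NormedSpace ℂ F] [CompleteSpace E] [CompleteSpace E'] [CompleteSpace F]
    (B : E →L[ℂ] E' →L[ℂ] F) {g : ℝ → E'} (hf : Integrable f) (hcf : HasCompactSupport f)
    (hg : Integrable g) (hcg : HasCompactSupport g) (z : ℂ) :
    laplace (convolution f g B volume) z = B (laplace f z) (laplace g z) := by
  rw [laplace, laplace, laplace, ← integral_convolution B (integrable_exp_smul hf hcf z)
    (integrable_exp_smul hg hcg z)]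
  congr with x
  rw [convolution_def, convolution_def, ← integral_smul]
  congr with t
  simp only [map_smul, smul_apply, smul_smul, ← Complex.exp_add]
  congr 2
  push_cast
  ring

end Laplace

section Support

open Filter

variable {E : Type*} [NormedAddCommGroup E] {f : ℝ → E} {a : ℝ}

theorem eq_zero_of_sSup_tsupport_lt (hcf : HasCompactSupport f) {t : ℝ}
    (ht : sSup (tsupport f) < t) : f t = 0 :=
  image_eq_zero_of_notMem_tsupport fun hmem =>
    ht.not_ge (le_csSup hcf.isCompact.bddAbove hmem)

theorem exists_ne_zero_of_lt_sSup_tsupport (hf0 : f ≠ 0) (ha : a < sSup (tsupport f)) :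
    ∃ t ∈ Ioi a, f t ≠ 0 := by
  have hne : (tsupport f).Nonempty :=
    nonempty_iff_ne_empty.2 (mt tsupport_eq_empty_iff.1 hf0)
  obtain ⟨s, hs, has⟩ := exists_lt_of_lt_csSup hne ha
  exact mem_closure_iff_nhds.1 hs (Ioi a) (Ioi_mem_nhds has)

variable [NormedSpace ℂ E]

theorem norm_laplace_le_sSup_tsupport (hf : Integrable f) (hcf : HasCompactSupport f) {z : ℂ}
    (hz : 0 ≤ z.re) : ‖laplace f z‖ ≤ (∫ t, ‖f t‖) * rexp (sSup (tsupport f) * z.re) := by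
  refine norm_laplace_le hf fun t ht => ?_
  rw [mul_comm]
  gcongr
  exact not_lt.1 fun hlt => ht (eq_zero_of_sSup_tsupport_lt hcf hlt)

theorem not_isBigO_laplace_of_lt_sSup_tsupport [CompleteSpace E] (hf : Continuous f)
    (hcf : HasCompactSupport f) (hf0 : f ≠ 0) (ha : a < sSup (tsupport f)) :
    ¬(fun x : ℝ => laplace f x) =O[atTop] fun x => rexp (a * x) := by
  intro hO
  obtain ⟨t, ht, hft⟩ := exists_ne_zero_of_lt_sSup_tsupport hf0 ha
  exact hft (eqOn_zero_Ioi_of_isBigO_laplace hf hcf hO ht)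

end Support

section Titchmarsh

variable {f g : ℝ → ℂ}

theorem integrable_convR (hf : Integrable f) (hg : Integrable g) : Integrable (convR f g) :=
  hf.integrable_convolution (ContinuousLinearMap.mul ℂ ℂ) hg

theorem laplace_convR (hf : Integrable f) (hcf : HasCompactSupport f) (hg : Integrable g)
    (hcg : HasCompactSupport g) (z : ℂ) :
    laplace (convR f g) z = laplace f z * laplace g z :=
  laplace_convolution (ContinuousLinearMap.mul ℂ ℂ) hf hcf hg hcg z

theorem convR_eq_zero_of_sSup_add_sSup_lt (hcf : HasCompactSupport f) (hcg : HasCompactSupport g)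
    {x : ℝ} (hx : sSup (tsupport f) + sSup (tsupport g) < x) : convR f g x = 0 := by
  refine integral_eq_zero_of_ae (Filter.Eventually.of_forall fun t => ?_)
  rcases le_or_gt t (sSup (tsupport f)) with ht | ht
  · simp [eq_zero_of_sSup_tsupport_lt hcg (show sSup (tsupport g) < x - t by linarith)]
  · simp [eq_zero_of_sSup_tsupport_lt hcf ht]

theorem exists_gt_convR_ne_zero (hf : Continuous f) (hg : Continuous g) (hcf : HasCompactSupport f)
    (hcg : HasCompactSupport g) (hf0 : f ≠ 0) (hg0 : g ≠ 0) {c : ℝ}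
    (hc : c < sSup (tsupport f) + sSup (tsupport g)) : ∃ x > c, convR f g x ≠ 0 := by
  have hfi : Integrable f := hf.integrable_of_hasCompactSupport hcf
  have hgi : Integrable g := hg.integrable_of_hasCompactSupport hcg
  by_contra! hzero
  refine hc.not_ge (add_le_of_norm_mul_le_exp (F := laplace f) (G := laplace g)
    (C := ∫ t, ‖convR f g t‖)
    (fun z _ => (differentiable_laplace hfi hcf).analyticAt z)
    (fun z _ => (differentiable_laplace hgi hcg).analyticAt z)
    (fun z hz => norm_laplace_le_sSup_tsupport hfi hcf hz)
    (fun z hz => norm_laplace_le_sSup_tsupport hgi hcg hz)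
    (fun a ha => not_isBigO_laplace_of_lt_sSup_tsupport hf hcf hf0 ha)
    (fun b hb => not_isBigO_laplace_of_lt_sSup_tsupport hg hcg hg0 hb) fun z hz => ?_)
  rw [← laplace_convR hfi hcf hgi hcg]
  refine norm_laplace_le (integrable_convR hfi hgi) fun t ht => ?_
  rw [mul_comm]
  gcongr
  exact not_lt.1 fun hlt => ht (hzero t hlt)

theorem convR_ne_zero (hf : Continuous f) (hg : Continuous g) (hcf : HasCompactSupport f)
    (hcg : HasCompactSupport g) (hf0 : f ≠ 0) (hg0 : g ≠ 0) : convR f g ≠ 0 := by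
  obtain ⟨x, -, hx⟩ := exists_gt_convR_ne_zero hf hg hcf hcg hf0 hg0 (sub_one_lt _)
  exact fun hzero => hx (congrFun hzero x)

theorem sSup_tsupport_convR (hf : Continuous f) (hg : Continuous g) (hcf : HasCompactSupport f)
    (hcg : HasCompactSupport g) (hf0 : f ≠ 0) (hg0 : g ≠ 0) :
    sSup (tsupport (convR f g)) = sSup (tsupport f) + sSup (tsupport g) := by
  refine csSup_eq_of_forall_le_of_forall_lt_exists_gt ?_ (fun x hx => ?_) fun c hc => ?_
  · exact nonempty_iff_ne_empty.2
      (mt tsupport_eq_empty_iff.1 (convR_ne_zero hf hg hcf hcg hf0 hg0))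
  · refine closure_minimal (fun y hy => ?_) isClosed_Iic hx
    exact not_lt.1 fun hlt => hy (convR_eq_zero_of_sSup_add_sSup_lt hcf hcg hlt)
  · obtain ⟨x, hcx, hx⟩ := exists_gt_convR_ne_zero hf hg hcf hcg hf0 hg0 hc
    exact ⟨x, subset_tsupport _ hx, hcx⟩

theorem convR_comp_neg (f g : ℝ → ℂ) :
    convR (fun t => f (-t)) (fun t => g (-t)) = fun x => convR f g (-x) := by
  ext x
  rw [convR, convR, ← integral_neg_eq_self]
  congr with t
  rw [neg_neg, show -(x - -t) = -x - t by ring]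

theorem sSup_tsupport_comp_neg {E : Type*} [Zero E] (f : ℝ → E) :
    sSup (tsupport fun t => f (-t)) = -sInf (tsupport f) := by
  rw [← Real.sSup_neg]
  exact congrArg sSup (tsupport_comp_eq_preimage f (Homeomorph.neg ℝ))

theorem comp_neg_ne_zero {E : Type*} [Zero E] {f : ℝ → E} (hf0 : f ≠ 0) :
    (fun t => f (-t)) ≠ 0 := fun h => hf0 (funext fun t => by simpa using congrFun h (-t))

theorem sInf_tsupport_convR (hf : Continuous f) (hg : Continuous g) (hcf : HasCompactSupport f)
    (hcg : HasCompactSupport g) (hf0 : f ≠ 0) (hg0 : g ≠ 0) :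
    sInf (tsupport (convR f g)) = sInf (tsupport f) + sInf (tsupport g) := by
  have hreflect := sSup_tsupport_convR (hf.comp continuous_neg) (hg.comp continuous_neg)
    (hcf.comp_homeomorph (Homeomorph.neg ℝ)) (hcg.comp_homeomorph (Homeomorph.neg ℝ))
    (comp_neg_ne_zero hf0) (comp_neg_ne_zero hg0)
  simp only [Function.comp_def, convR_comp_neg, sSup_tsupport_comp_neg] at hreflect
  linarith

end Titchmarsh

/-- The Titchmarsh convolution theorem. -/
theorem titchmarsh_convolution (f g : ℝ → ℂ)
    (hf : Continuous f) (hg : Continuous g)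
    (hcf : HasCompactSupport f) (hcg : HasCompactSupport g)
    (hf0 : f ≠ 0) (hg0 : g ≠ 0) :
    convR f g ≠ 0 ∧
    sInf (tsupport (convR f g)) = sInf (tsupport f) + sInf (tsupport g) ∧
    sSup (tsupport (convR f g)) = sSup (tsupport f) + sSup (tsupport g) :=
  ⟨convR_ne_zero hf hg hcf hcg hf0 hg0, sInf_tsupport_convR hf hg hcf hcg hf0 hg0,
    sSup_tsupport_convR hf hg hcf hcg hf0 hg0⟩

end
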